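/- Fix γ > 2 and let β > 0 satisfy 1/β + 1/γ = 1. Let φ(t) = t²/γ for |t| < 1 and φ(t) = |t|^γ/γ for |t| ≥ 1. Let X = {X(t), t ∈ [0,T]} and X_N = {X_N(t), t ∈ [0,T]} be jointly measurable stochastic processes with X(t) − X_N(t) ∈ Sub_φ(Ω) for every t, and fix p ≥ 1, δ > 0, α ∈ (0,1). Suppose c_N = ∫₀^T (τ_φ(X(t) − X_N(t)))^p dt < ∞. If c_N ≤ δ / (β ln(2/α))^{p/β} and c_N < δ / p^{p(1 − 1/γ)}, then P{ ∫₀^T |X(t) − X_N(t)|^p dt > δ } ≤ α. -/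

import Mathlib

open MeasureTheory Filter Set ProbabilityTheory

noncomputable section

/-- The set of admissible sub-φ constants of a random variable. -/
def subPhiBounds {Ω : Type*} [MeasurableSpace Ω] (P : Measure Ω) (φ : ℝ → ℝ) (ξ : Ω → ℝ) :
    Set ℝ :=
  {a | 0 < a ∧ ∀ l : ℝ, ∫ ω, Real.exp (l * ξ ω) ∂P ≤ Real.exp (φ (a * l))}

/-- `ξ ∈ Sub_φ(Ω)`. -/
def IsSubPhi {Ω : Type*} [MeasurableSpace Ω] (P : Measure Ω) (φ : ℝ → ℝ) (ξ : Ω → ℝ) : Prop :=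
  Measurable ξ ∧ (∫ ω, ξ ω ∂P) = 0 ∧
    (∀ l : ℝ, Integrable (fun ω => Real.exp (l * ξ ω)) P) ∧
    (subPhiBounds P φ ξ).Nonempty

/-- The φ-sub-Gaussian standard `τ_φ(ξ)`. -/
def tauPhi {Ω : Type*} [MeasurableSpace Ω] (P : Measure Ω) (φ : ℝ → ℝ) (ξ : Ω → ℝ) : ℝ :=
  sInf (subPhiBounds P φ ξ)

/-- An N-Orlicz function. -/
def IsNOrlicz (φ : ℝ → ℝ) : Prop :=
  Continuous φ ∧ (∀ x, φ (-x) = φ x) ∧ ConvexOn ℝ Set.univ φ ∧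
    StrictMonoOn φ (Set.Ioi 0) ∧ φ 0 = 0 ∧ (∀ x ≠ 0, 0 < φ x) ∧
    Tendsto (fun x => φ x / x) (nhdsWithin 0 (Set.Ioi 0)) (nhds 0) ∧
    Tendsto (fun x => φ x / x) atTop atTop

/-- The Young–Fenchel transform `φ*`. -/
def youngFenchel (φ : ℝ → ℝ) (x : ℝ) : ℝ := ⨆ y : ℝ, (x * y - φ y)

/-- The function `φ(t) = t²/γ` for `|t| < 1`, `|t|^γ/γ` for `|t| ≥ 1`. -/
def phiGamma (γ : ℝ) : ℝ → ℝ := fun x => if |x| < 1 then x ^ 2 / γ else |x| ^ γ / γ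

/-!
Every `ξ ∈ Sub_φ(Ω)` satisfies `E|ξ|^s ≤ C τ_φ(ξ)^s`, because
`|x|^s ≤ (s / (e u))^s exp(u |x|)` for every `u > 0`. By Minkowski's integral inequality in
`L_{s/p}(Ω)`, the `s/p`-th moment of `∫ |Y(t)|^p dt` is therefore at most `C c^{s/p}`, where
`c = ∫ τ_φ(Y(t))^p dt`, and Markov's inequality bounds the tail at `δ` by `C (c / δ)^{s/p}`.
For the given `φ` and `s ≥ 1` take `u = s^{1/γ}`, which minimizes `u^{-s} exp(u^γ / γ)`; then
`C = 2 s^{s/β} exp(-s/β)`. The two conditions on `c` together give `c ≤ δ / s^{p/β}` for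
`s = max (p, β ln(2/α))`, so the tail is at most `2 exp(-s/β) ≤ α`.
-/

open scoped ENNReal

section Minkowski

variable {S Ω : Type*} [MeasurableSpace S] [MeasurableSpace Ω] {μ : Measure S} {q : ℝ}

lemma rpow_one_sub_mul_rpow_le (x : ℝ≥0∞) (q : ℝ) : x ^ (1 - q) * x ^ q ≤ x := by
  rcases eq_or_ne x ∞ with rfl | h_top
  · exact le_top
  rcases eq_or_ne x 0 with rfl | h0
  · rcases lt_or_ge 0 q with hq | hq
    · simp [hq]
    · simp [ENNReal.zero_rpow_of_pos (by linarith : 0 < 1 - q)]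
  · rw [← ENNReal.rpow_add _ _ h0 h_top, sub_add_cancel, ENNReal.rpow_one]

lemma lintegral_rpow_le_mul_lintegral_weighted {f w : S → ℝ≥0∞} (hf : Measurable f)
    (hw : Measurable w) (hq : 1 ≤ q) (hw_top : ∀ᵐ t ∂μ, w t ≠ ∞)
    (hfw : ∀ᵐ t ∂μ, w t = 0 → f t = 0) :
    (∫⁻ t, f t ∂μ) ^ q ≤ (∫⁻ t, w t ∂μ) ^ (q - 1) * ∫⁻ t, w t ^ (1 - q) * f t ^ q ∂μ := by
  have hq0 : 0 < q := by linarith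
  have factor : ∀ᵐ t ∂μ, f t = w t ^ ((q - 1) / q) * (w t ^ (1 - q) * f t ^ q) ^ (1 / q) := by
    filter_upwards [hw_top, hfw] with t ht_top ht
    rcases eq_or_ne (w t) 0 with h0 | h0
    · simp [ht h0, hq0]
    · rw [ENNReal.mul_rpow_of_nonneg _ _ (by positivity), ← ENNReal.rpow_mul, ← ENNReal.rpow_mul,
        mul_one_div_cancel hq0.ne', ENNReal.rpow_one, ← mul_assoc, ← ENNReal.rpow_add _ _ h0 ht_top,
        show (q - 1) / q + (1 - q) * (1 / q) = 0 by ring, ENNReal.rpow_zero, one_mul]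
  calc (∫⁻ t, f t ∂μ) ^ q
      = (∫⁻ t, w t ^ ((q - 1) / q) * (w t ^ (1 - q) * f t ^ q) ^ (1 / q) ∂μ) ^ q := by
        rw [lintegral_congr_ae factor]
    _ ≤ ((∫⁻ t, w t ∂μ) ^ ((q - 1) / q) * (∫⁻ t, w t ^ (1 - q) * f t ^ q ∂μ) ^ (1 / q)) ^ q := by
        gcongr
        exact ENNReal.lintegral_mul_norm_pow_le hw.aemeasurable (by fun_prop)
          (div_nonneg (by linarith) hq0.le) (by positivity) (by field_simp; ring)
    _ = (∫⁻ t, w t ∂μ) ^ (q - 1) * ∫⁻ t, w t ^ (1 - q) * f t ^ q ∂μ := by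
        rw [ENNReal.mul_rpow_of_nonneg _ _ hq0.le, ← ENNReal.rpow_mul, ← ENNReal.rpow_mul,
          div_mul_cancel₀ _ hq0.ne', one_div_mul_cancel hq0.ne', ENNReal.rpow_one]

lemma ae_ae_eq_zero_of_lintegral_rpow_eq_zero [SFinite μ] {P : Measure Ω} [SFinite P]
    {f : S → Ω → ℝ≥0∞} (hf : Measurable (Function.uncurry f)) (hq : 0 < q) :
    ∀ᵐ ω ∂P, ∀ᵐ t ∂μ, ∫⁻ ω', f t ω' ^ q ∂P = 0 → f t ω = 0 := by
  have h_meas : MeasurableSet {z : S × Ω | ∫⁻ ω', f z.1 ω' ^ q ∂P = 0 → f z.1 z.2 = 0} :=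
    (measurableSet_eq_fun ((hf.pow_const q).lintegral_prod_right'.comp measurable_fst)
      measurable_const).imp (measurableSet_eq_fun hf measurable_const)
  refine (Measure.ae_ae_comm h_meas).1 (ae_of_all _ fun t => ?_)
  by_cases ht : ∫⁻ ω', f t ω' ^ q ∂P = 0
  · filter_upwards [ENNReal.ae_eq_zero_of_lintegral_rpow_eq_zero hq.le
      hf.of_uncurry_left.aemeasurable ht] with ω hω _ using hω
  · exact ae_of_all _ fun _ h => absurd h ht

/-- **Minkowski's integral inequality**. -/
theorem lintegral_rpow_lintegral_le_rpow_lintegral [SFinite μ] {P : Measure Ω} [SFinite P]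
    {f : S → Ω → ℝ≥0∞} (hf : Measurable (Function.uncurry f)) (hq : 1 ≤ q) :
    ∫⁻ ω, (∫⁻ t, f t ω ∂μ) ^ q ∂P ≤ (∫⁻ t, (∫⁻ ω, f t ω ^ q ∂P) ^ (1 / q) ∂μ) ^ q := by
  have hq0 : 0 < q := by linarith
  set N : S → ℝ≥0∞ := fun t => (∫⁻ ω, f t ω ^ q ∂P) ^ (1 / q) with hN
  have hN_meas : Measurable N := (hf.pow_const q).lintegral_prod_right'.pow_const _
  have hN_pow (t : S) : ∫⁻ ω, f t ω ^ q ∂P = N t ^ q := by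
    rw [hN, ← ENNReal.rpow_mul, one_div_mul_cancel hq0.ne', ENNReal.rpow_one]
  rcases eq_or_ne (∫⁻ t, N t ∂μ) ∞ with h_top | h_top
  · simp [h_top, ENNReal.top_rpow_of_pos hq0]
  have hN_top : ∀ᵐ t ∂μ, N t ≠ ∞ := (ae_lt_top hN_meas h_top).mono fun _ => ne_of_lt
  have hN_zero : ∀ᵐ ω ∂P, ∀ᵐ t ∂μ, N t = 0 → f t ω = 0 := by
    filter_upwards [ae_ae_eq_zero_of_lintegral_rpow_eq_zero (μ := μ) (P := P) hf hq0] with ω hω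
    filter_upwards [hω] with t ht hNt
    exact ht (by rw [hN_pow, hNt, ENNReal.zero_rpow_of_pos hq0])
  -- With the weight `N` itself, integrating in `ω` turns the weighted integrand into `N`.
  calc ∫⁻ ω, (∫⁻ t, f t ω ∂μ) ^ q ∂P
      ≤ ∫⁻ ω, (∫⁻ t, N t ∂μ) ^ (q - 1) * ∫⁻ t, N t ^ (1 - q) * f t ω ^ q ∂μ ∂P := by
        refine lintegral_mono_ae ?_
        filter_upwards [hN_zero] with ω hω
        exact lintegral_rpow_le_mul_lintegral_weighted hf.of_uncurry_right hN_meas hq hN_top hω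
    _ = (∫⁻ t, N t ∂μ) ^ (q - 1) * ∫⁻ t, N t ^ (1 - q) * N t ^ q ∂μ := by
        rw [lintegral_const_mul' _ _ (ENNReal.rpow_ne_top_of_nonneg (by linarith) h_top),
          lintegral_lintegral_swap]
        · simp_rw [← hN_pow]
          congr! 3 with t
          exact lintegral_const_mul _ (hf.of_uncurry_left.pow_const q)
        · exact (((hN_meas.comp measurable_snd).pow_const _).mul
            ((hf.comp measurable_swap).pow_const q)).aemeasurable
    _ ≤ (∫⁻ t, N t ∂μ) ^ (q - 1) * ∫⁻ t, N t ∂μ := by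
        gcongr with t
        exact rpow_one_sub_mul_rpow_le (N t) q
    _ = (∫⁻ t, N t ∂μ) ^ q := by
        conv_lhs => rw [← ENNReal.rpow_one (∫⁻ t, N t ∂μ), ← ENNReal.rpow_mul, one_mul,
          ← ENNReal.rpow_add_of_nonneg _ _ (by linarith) zero_le_one, sub_add_cancel]

end Minkowski

section Moments

lemma rpow_le_mul_exp {x s u : ℝ} (hx : 0 ≤ x) (hs : 0 < s) (hu : 0 < u) :
    x ^ s ≤ (s / (Real.exp 1 * u)) ^ s * Real.exp (u * x) := by
  have h_tangent : u * x / s ≤ Real.exp (u * x / s - 1) := by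
    linarith [Real.add_one_le_exp (u * x / s - 1)]
  calc x ^ s = (s / u * (u * x / s)) ^ s := by congr 1; field_simp
    _ ≤ (s / u * Real.exp (u * x / s - 1)) ^ s := by gcongr
    _ = (s / (Real.exp 1 * u) * Real.exp (u * x / s)) ^ s := by
        rw [Real.exp_sub]; congr 1; field_simp
    _ = (s / (Real.exp 1 * u)) ^ s * Real.exp (u * x) := by
        rw [Real.mul_rpow (by positivity) (by positivity), ← Real.exp_mul,
          div_mul_cancel₀ _ hs.ne']

/-- The constant `C` in the moment bound `E|ξ|^s ≤ C τ_φ(ξ)^s` for `ξ ∈ Sub_φ(Ω)`; the parameter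
`u > 0` is free. -/
def subPhiMomentConst (φ : ℝ → ℝ) (s u : ℝ) : ℝ :=
  (s / (Real.exp 1 * u)) ^ s * (Real.exp (φ u) + Real.exp (φ (-u)))

variable {Ω : Type*} [MeasurableSpace Ω] {P : Measure Ω} {φ : ℝ → ℝ} {ξ : Ω → ℝ} {s u : ℝ}

lemma lintegral_enorm_rpow_le_of_mem_subPhiBounds
    (hexp : ∀ l : ℝ, Integrable (fun ω => Real.exp (l * ξ ω)) P) (hs : 0 < s) (hu : 0 < u)
    {a : ℝ} (ha : a ∈ subPhiBounds P φ ξ) :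
    ∫⁻ ω, ‖ξ ω‖ₑ ^ s ∂P ≤
      ENNReal.ofReal (subPhiMomentConst φ s u) * ENNReal.ofReal a ^ s := by
  obtain ⟨ha0, hmgf⟩ := ha
  set K := (s / (Real.exp 1 * (u / a))) ^ s with hK
  have : 0 ≤ K := by positivity
  have hsum : Integrable (fun ω => Real.exp (u / a * ξ ω) + Real.exp (-u / a * ξ ω)) P :=
    (hexp _).add (hexp _)
  have pointwise (ω : Ω) :
      |ξ ω| ^ s ≤ K * (Real.exp (u / a * ξ ω) + Real.exp (-u / a * ξ ω)) := by
    refine (rpow_le_mul_exp (abs_nonneg _) hs (div_pos hu ha0)).trans ?_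
    gcongr
    simpa [abs_mul, abs_of_pos (div_pos hu ha0), neg_div] using Real.exp_abs_le (u / a * ξ ω)
  have hmgf_sum : ∫ ω, (Real.exp (u / a * ξ ω) + Real.exp (-u / a * ξ ω)) ∂P ≤
      Real.exp (φ u) + Real.exp (φ (-u)) := by
    rw [integral_add (hexp _) (hexp _)]
    simpa only [mul_div_cancel₀ _ ha0.ne'] using add_le_add (hmgf (u / a)) (hmgf (-u / a))
  calc ∫⁻ ω, ‖ξ ω‖ₑ ^ s ∂P
      ≤ ∫⁻ ω, ENNReal.ofReal (K * (Real.exp (u / a * ξ ω) + Real.exp (-u / a * ξ ω))) ∂P := by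
        refine lintegral_mono fun ω => ?_
        rw [Real.enorm_eq_ofReal_abs, ENNReal.ofReal_rpow_of_nonneg (abs_nonneg _) hs.le]
        exact ENNReal.ofReal_le_ofReal (pointwise ω)
    _ = ENNReal.ofReal (K * ∫ ω, (Real.exp (u / a * ξ ω) + Real.exp (-u / a * ξ ω)) ∂P) := by
        rw [← integral_const_mul, ofReal_integral_eq_lintegral_ofReal (hsum.const_mul K)
          (ae_of_all _ fun ω => by positivity)]
    _ ≤ ENNReal.ofReal (K * (Real.exp (φ u) + Real.exp (φ (-u)))) := by gcongr
    _ = ENNReal.ofReal (subPhiMomentConst φ s u) * ENNReal.ofReal a ^ s := by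
        rw [ENNReal.ofReal_rpow_of_nonneg ha0.le hs.le, ← ENNReal.ofReal_mul' (by positivity),
          subPhiMomentConst, hK, ← mul_div_assoc, div_div_eq_mul_div, mul_div_right_comm,
          Real.mul_rpow (by positivity) ha0.le, mul_right_comm]

lemma IsSubPhi.lintegral_enorm_rpow_le (h : IsSubPhi P φ ξ) (hs : 0 < s) (hu : 0 < u) :
    ∫⁻ ω, ‖ξ ω‖ₑ ^ s ∂P ≤
      ENNReal.ofReal (subPhiMomentConst φ s u) * ENNReal.ofReal (tauPhi P φ ξ) ^ s := by
  obtain ⟨-, -, hexp, hne⟩ := h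
  have h_closed : IsClosed {a : ℝ | ∫⁻ ω, ‖ξ ω‖ₑ ^ s ∂P ≤
      ENNReal.ofReal (subPhiMomentConst φ s u) * ENNReal.ofReal a ^ s} :=
    isClosed_le continuous_const <| (ENNReal.continuous_const_mul ENNReal.ofReal_ne_top).comp <|
      ENNReal.continuous_rpow_const.comp ENNReal.continuous_ofReal
  exact closure_minimal
    (fun _ ha => lintegral_enorm_rpow_le_of_mem_subPhiBounds hexp hs hu ha) h_closed
    (csInf_mem_closure hne ⟨0, fun _ ha => ha.1.le⟩)

lemma tauPhi_nonneg : 0 ≤ tauPhi P φ ξ :=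
  Real.sInf_nonneg fun _ ha => ha.1.le

end Moments

section Tail

variable {S Ω : Type*} [MeasurableSpace S] [MeasurableSpace Ω] {μ : Measure S} [SFinite μ]
  {P : Measure Ω} [SFinite P] {φ : ℝ → ℝ} {Y : S → Ω → ℝ} {p s u δ : ℝ}

lemma lintegral_rpow_lintegral_enorm_rpow_le (hY : Measurable (Function.uncurry Y))
    (hsub : ∀ᵐ t ∂μ, IsSubPhi P φ (Y t)) (hp : 0 < p) (hps : p ≤ s) (hu : 0 < u) :
    ∫⁻ ω, (∫⁻ t, ‖Y t ω‖ₑ ^ p ∂μ) ^ (s / p) ∂P ≤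
      ENNReal.ofReal (subPhiMomentConst φ s u) *
        (∫⁻ t, ENNReal.ofReal (tauPhi P φ (Y t) ^ p) ∂μ) ^ (s / p) := by
  have hs : 0 < s := hp.trans_le hps
  set C := ENNReal.ofReal (subPhiMomentConst φ s u)
  have moment_norm : ∀ᵐ t ∂μ, (∫⁻ ω, (‖Y t ω‖ₑ ^ p) ^ (s / p) ∂P) ^ (1 / (s / p)) ≤
      C ^ (p / s) * ENNReal.ofReal (tauPhi P φ (Y t) ^ p) := by
    filter_upwards [hsub] with t ht
    simp_rw [← ENNReal.rpow_mul, mul_div_cancel₀ s hp.ne', one_div_div]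
    calc (∫⁻ ω, ‖Y t ω‖ₑ ^ s ∂P) ^ (p / s)
        ≤ (C * ENNReal.ofReal (tauPhi P φ (Y t)) ^ s) ^ (p / s) := by
          gcongr
          exact ht.lintegral_enorm_rpow_le hs hu
      _ = C ^ (p / s) * ENNReal.ofReal (tauPhi P φ (Y t) ^ p) := by
          rw [ENNReal.mul_rpow_of_nonneg _ _ (by positivity), ← ENNReal.rpow_mul,
            mul_div_cancel₀ p hs.ne', ENNReal.ofReal_rpow_of_nonneg tauPhi_nonneg hp.le]
  calc ∫⁻ ω, (∫⁻ t, ‖Y t ω‖ₑ ^ p ∂μ) ^ (s / p) ∂P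
      ≤ (∫⁻ t, (∫⁻ ω, (‖Y t ω‖ₑ ^ p) ^ (s / p) ∂P) ^ (1 / (s / p)) ∂μ) ^ (s / p) :=
        lintegral_rpow_lintegral_le_rpow_lintegral (hY.enorm.pow_const p) ((one_le_div hp).2 hps)
    _ ≤ (∫⁻ t, C ^ (p / s) * ENNReal.ofReal (tauPhi P φ (Y t) ^ p) ∂μ) ^ (s / p) := by
        gcongr ?_ ^ (s / p)
        exact lintegral_mono_ae moment_norm
    _ = C * (∫⁻ t, ENNReal.ofReal (tauPhi P φ (Y t) ^ p) ∂μ) ^ (s / p) := by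
        rw [lintegral_const_mul' _ _ (by finiteness),
          ENNReal.mul_rpow_of_nonneg _ _ (by positivity), ← ENNReal.rpow_mul,
          div_mul_div_cancel₀ hs.ne', div_self hp.ne', ENNReal.rpow_one]

lemma measure_lt_integral_abs_rpow_le (hY : Measurable (Function.uncurry Y))
    (hsub : ∀ᵐ t ∂μ, IsSubPhi P φ (Y t))
    (hint : Integrable (fun t => tauPhi P φ (Y t) ^ p) μ)
    (hp : 0 < p) (hps : p ≤ s) (hu : 0 < u) (hδ : 0 < δ) :
    P {ω | δ < ∫ t, |Y t ω| ^ p ∂μ} ≤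
      ENNReal.ofReal
        (subPhiMomentConst φ s u * ((∫ t, tauPhi P φ (Y t) ^ p ∂μ) / δ) ^ (s / p)) := by
  have hτ (t : S) : 0 ≤ tauPhi P φ (Y t) ^ p := Real.rpow_nonneg tauPhi_nonneg p
  have hc : 0 ≤ ∫ t, tauPhi P φ (Y t) ^ p ∂μ := integral_nonneg hτ
  have hsp : 0 ≤ s / p := div_nonneg (hp.le.trans hps) hp.le
  have h_subset : {ω | δ < ∫ t, |Y t ω| ^ p ∂μ} ⊆
      {ω | ENNReal.ofReal δ ^ (s / p) ≤ (∫⁻ t, ‖Y t ω‖ₑ ^ p ∂μ) ^ (s / p)} := fun ω hω => by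
    refine ENNReal.rpow_le_rpow ?_ hsp
    calc ENNReal.ofReal δ ≤ ‖∫ t, |Y t ω| ^ p ∂μ‖ₑ := by
          rw [Real.enorm_eq_ofReal_abs]
          exact ENNReal.ofReal_le_ofReal (hω.le.trans (le_abs_self _))
      _ ≤ ∫⁻ t, ‖|Y t ω| ^ p‖ₑ ∂μ := enorm_integral_le_lintegral_enorm _
      _ = ∫⁻ t, ‖Y t ω‖ₑ ^ p ∂μ := by
          simp_rw [Real.enorm_rpow_of_nonneg (abs_nonneg _) hp.le, Real.enorm_abs]
  have h_meas : Measurable fun ω => (∫⁻ t, ‖Y t ω‖ₑ ^ p ∂μ) ^ (s / p) :=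
    (hY.enorm.pow_const p).lintegral_prod_left'.pow_const _
  calc P {ω | δ < ∫ t, |Y t ω| ^ p ∂μ}
      ≤ (∫⁻ ω, (∫⁻ t, ‖Y t ω‖ₑ ^ p ∂μ) ^ (s / p) ∂P) / ENNReal.ofReal δ ^ (s / p) :=
        (measure_mono h_subset).trans <| meas_ge_le_lintegral_div h_meas.aemeasurable
          (by simp [hδ]) (by finiteness)
    _ ≤ ENNReal.ofReal (subPhiMomentConst φ s u) *
        (∫⁻ t, ENNReal.ofReal (tauPhi P φ (Y t) ^ p) ∂μ) ^ (s / p) /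
          ENNReal.ofReal δ ^ (s / p) := by
        gcongr
        exact lintegral_rpow_lintegral_enorm_rpow_le hY hsub hp hps hu
    _ = ENNReal.ofReal
        (subPhiMomentConst φ s u * ((∫ t, tauPhi P φ (Y t) ^ p ∂μ) / δ) ^ (s / p)) := by
        rw [← ofReal_integral_eq_lintegral_ofReal hint (ae_of_all _ hτ), mul_div_assoc,
          ← ENNReal.div_rpow_of_nonneg _ _ hsp, ← ENNReal.ofReal_div_of_pos hδ,
          ENNReal.ofReal_rpow_of_nonneg (div_nonneg hc hδ.le) hsp,
          ← ENNReal.ofReal_mul' (by positivity)]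

end Tail

section PhiGamma

variable {γ β : ℝ}

lemma phiGamma_neg (x : ℝ) : phiGamma γ (-x) = phiGamma γ x := by
  simp only [phiGamma, abs_neg, neg_sq]

lemma phiGamma_of_one_le {x : ℝ} (hx : 1 ≤ x) : phiGamma γ x = x ^ γ / γ := by
  rw [phiGamma, abs_of_nonneg (by linarith), if_neg hx.not_gt]

lemma subPhiMomentConst_phiGamma (h : γ.HolderConjugate β) {s : ℝ} (hs : 1 ≤ s) :
    subPhiMomentConst (phiGamma γ) s (s ^ (1 / γ)) =
      2 * (s ^ (1 / β)) ^ s * Real.exp (-(s / β)) := by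
  have hs0 : 0 < s := by linarith
  have hβ : 1 / β = 1 - 1 / γ := by
    simpa only [one_div] using h.one_sub_inv.symm
  have h_phi : phiGamma γ (s ^ (1 / γ)) = s / γ := by
    rw [phiGamma_of_one_le (Real.one_le_rpow hs (one_div_nonneg.2 h.nonneg)),
      ← Real.rpow_mul hs0.le, one_div_mul_cancel h.ne_zero, Real.rpow_one]
  have h_base : s / (Real.exp 1 * s ^ (1 / γ)) = s ^ (1 / β) * Real.exp (-1) := by
    rw [hβ, Real.rpow_sub hs0, Real.rpow_one, Real.exp_neg]
    field_simp
  have h_exp : Real.exp (-(s / β)) = Real.exp (-1 * s) * Real.exp (s / γ) := by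
    rw [← Real.exp_add, div_eq_mul_one_div s β, hβ]
    congr 1
    ring
  rw [subPhiMomentConst, phiGamma_neg, h_phi, h_base,
    Real.mul_rpow (by positivity) (by positivity), ← Real.exp_mul, h_exp]
  ring

variable {S Ω : Type*} [MeasurableSpace S] [MeasurableSpace Ω] {μ : Measure S} [SFinite μ]
  {P : Measure Ω} [SFinite P] {Y : S → Ω → ℝ} {p s δ : ℝ}

lemma measure_lt_integral_abs_rpow_le_two_mul_exp (h : γ.HolderConjugate β)
    (hY : Measurable (Function.uncurry Y))
    (hsub : ∀ᵐ t ∂μ, IsSubPhi P (phiGamma γ) (Y t))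
    (hint : Integrable (fun t => tauPhi P (phiGamma γ) (Y t) ^ p) μ)
    (hp : 0 < p) (hps : p ≤ s) (hs : 1 ≤ s) (hδ : 0 < δ)
    (hc : ∫ t, tauPhi P (phiGamma γ) (Y t) ^ p ∂μ ≤ δ / s ^ (p / β)) :
    P {ω | δ < ∫ t, |Y t ω| ^ p ∂μ} ≤ ENNReal.ofReal (2 * Real.exp (-(s / β))) := by
  have hs0 : 0 < s := by linarith
  set c := ∫ t, tauPhi P (phiGamma γ) (Y t) ^ p ∂μ
  have hc0 : 0 ≤ c := integral_nonneg fun t => Real.rpow_nonneg tauPhi_nonneg p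
  have h_ratio : (c / δ) ^ (s / p) ≤ ((s ^ (1 / β)) ^ s)⁻¹ := by
    calc (c / δ) ^ (s / p) ≤ ((s ^ (p / β))⁻¹) ^ (s / p) := by
          gcongr
          rwa [div_le_iff₀' hδ, ← div_eq_mul_inv]
      _ = ((s ^ (1 / β)) ^ s)⁻¹ := by
          rw [Real.inv_rpow (by positivity), ← Real.rpow_mul hs0.le, ← Real.rpow_mul hs0.le]
          congr 2
          field_simp
  refine (measure_lt_integral_abs_rpow_le hY hsub hint hp hps
    (Real.rpow_pos_of_pos hs0 (1 / γ)) hδ).trans (ENNReal.ofReal_le_ofReal ?_)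
  rw [subPhiMomentConst_phiGamma h hs]
  calc 2 * (s ^ (1 / β)) ^ s * Real.exp (-(s / β)) * (c / δ) ^ (s / p)
      ≤ 2 * (s ^ (1 / β)) ^ s * Real.exp (-(s / β)) * ((s ^ (1 / β)) ^ s)⁻¹ := by gcongr
    _ = 2 * Real.exp (-(s / β)) := by field_simp

theorem statement3_general (h : γ.HolderConjugate β) (hY : Measurable (Function.uncurry Y))
    (hsub : ∀ᵐ t ∂μ, IsSubPhi P (phiGamma γ) (Y t))
    (hint : Integrable (fun t => tauPhi P (phiGamma γ) (Y t) ^ p) μ)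
    (hp : 1 ≤ p) (hδ : 0 < δ) {α : ℝ} (hα : 0 < α)
    (h1 : ∫ t, tauPhi P (phiGamma γ) (Y t) ^ p ∂μ ≤ δ / (β * Real.log (2 / α)) ^ (p / β))
    (h2 : ∫ t, tauPhi P (phiGamma γ) (Y t) ^ p ∂μ ≤ δ / p ^ (p * (1 - 1 / γ))) :
    P {ω | δ < ∫ t, |Y t ω| ^ p ∂μ} ≤ ENNReal.ofReal α := by
  have hβ : 0 < β := h.symm.pos
  set s := max p (β * Real.log (2 / α))
  have hc : ∫ t, tauPhi P (phiGamma γ) (Y t) ^ p ∂μ ≤ δ / s ^ (p / β) := by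
    rcases max_choice p (β * Real.log (2 / α)) with hs | hs
    · rwa [one_div, h.one_sub_inv, ← div_eq_mul_inv, ← congrArg (· ^ (p / β)) hs] at h2
    · rwa [← hs] at h1
  have hs_log : Real.log (2 / α) ≤ s / β := (le_div_iff₀' hβ).2 (le_max_right _ _)
  refine (measure_lt_integral_abs_rpow_le_two_mul_exp h hY hsub hint (by linarith)
    (le_max_left _ _) (hp.trans (le_max_left _ _)) hδ hc).trans (ENNReal.ofReal_le_ofReal ?_)
  calc 2 * Real.exp (-(s / β)) ≤ 2 * Real.exp (-Real.log (2 / α)) := by gcongr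
    _ = α := by
        rw [Real.exp_neg, Real.exp_log (by positivity)]
        field_simp

end PhiGamma

/-- Theorem 4: modelling with given reliability and accuracy in `L_p(0,T)` for
`φ(t) = t²/γ` if `|t| < 1`, `|t|^γ/γ` if `|t| ≥ 1`, with `γ > 2`. -/
theorem statement3 {Ω : Type*} [MeasurableSpace Ω]
    (P : Measure Ω) [IsProbabilityMeasure P]
    (γ β : ℝ) (hγ : 2 < γ) (hβ : 0 < β) (hβγ : 1 / β + 1 / γ = 1)
    (T : ℝ) (hT : 0 < T)
    (X XN : ℝ → Ω → ℝ)
    (hX : Measurable (Function.uncurry X)) (hXN : Measurable (Function.uncurry XN))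
    (hsub : ∀ t ∈ Set.Icc (0:ℝ) T, IsSubPhi P (phiGamma γ) (fun ω => X t ω - XN t ω))
    (p δ α : ℝ) (hp : 1 ≤ p) (hδ : 0 < δ) (hα : α ∈ Set.Ioo (0:ℝ) 1)
    (cN : ℝ)
    (hcN : cN = ∫ t in Set.Ioc 0 T,
      tauPhi P (phiGamma γ) (fun ω => X t ω - XN t ω) ^ p)
    (hint : IntegrableOn
      (fun t => tauPhi P (phiGamma γ) (fun ω => X t ω - XN t ω) ^ p) (Set.Ioc 0 T))
    (h1 : cN ≤ δ / (β * Real.log (2 / α)) ^ (p / β))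
    (h2 : cN < δ / p ^ (p * (1 - 1 / γ))) :
    P {ω | δ < ∫ t in Set.Ioc 0 T, |X t ω - XN t ω| ^ p} ≤ ENNReal.ofReal α := by
  have hγβ : γ.HolderConjugate β := ⟨by simpa [add_comm] using hβγ, by linarith, hβ⟩
  subst hcN
  exact statement3_general hγβ (hX.sub hXN)
    ((ae_restrict_mem measurableSet_Ioc).mono fun t ht => hsub t (Ioc_subset_Icc_self ht))
    hint hp hδ hα.1 h1 h2.le
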